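/- arXiv:1902.08720 — 2 statements merged into one kernel-verified Lean document; each statement's English description precedes it below -/
import Mathlib

section
/- Let ⟨α,α'⟩ be an (m,n)-shuffle. The assignment sending each i ∈ ⌜⟨α,α'⟩ to the unique (m,n)-shuffle ⟨β,β'⟩ with β(j) = α(j) for j ≠ i and β(i) = α(i) + 1 is a bijection between the upper-left corner set ⌜⟨α,α'⟩ and the set of immediate successors of ⟨α,α'⟩ in the poset of (m,n)-shuffles. -/
/-- Extend a map `Fin (N+1) → Fin (M+1)` to a `ℕ`-valued map on all of `ℕ`,
clamping the input to the range `{0, …, N}`. -/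
def extendFin {N M : ℕ} (f : Fin (N + 1) → Fin (M + 1)) (i : ℕ) : ℕ :=
  (f ⟨min i N, Nat.lt_succ_of_le (min_le_right i N)⟩ : ℕ)

/-- `⟨α, α'⟩` is an `(m,n)`-shuffle: both maps are monotone surjections and
`α i + α' i = i` for all `i`. -/
def IsShuffle (m n : ℕ) (α : Fin (m + n + 1) → Fin (m + 1))
    (α' : Fin (m + n + 1) → Fin (n + 1)) : Prop :=
  Monotone α ∧ Monotone α' ∧ Function.Surjective α ∧ Function.Surjective α' ∧
    ∀ i : Fin (m + n + 1), (α i : ℕ) + (α' i : ℕ) = (i : ℕ)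

/-- The pointwise order on `(m,n)`-shuffles (a shuffle is determined by its
first component). -/
def ShuffleLE (m n : ℕ) (α β : Fin (m + n + 1) → Fin (m + 1)) : Prop :=
  ∀ i, α i ≤ β i

/-- The strict pointwise order on `(m,n)`-shuffles. -/
def ShuffleLT (m n : ℕ) (α β : Fin (m + n + 1) → Fin (m + 1)) : Prop :=
  ShuffleLE m n α β ∧ α ≠ β

/-- The lower-right corner set `⌞⟨α,α'⟩`: all `i` with `1 ≤ i ≤ m+n-1` such that
`α(i+1) = α(i) = α(i-1)+1`. -/
def lrCorner (m n : ℕ) (α : Fin (m + n + 1) → Fin (m + 1)) : Set ℕ :=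
  {i | 1 ≤ i ∧ i + 1 ≤ m + n ∧
    extendFin α (i + 1) = extendFin α i ∧ extendFin α i = extendFin α (i - 1) + 1}

/-- The upper-left corner set `⌜⟨α,α'⟩`: all `i` with `1 ≤ i ≤ m+n-1` such that
`α(i+1) = α(i)+1 = α(i-1)+1`. -/
def ulCorner (m n : ℕ) (α : Fin (m + n + 1) → Fin (m + 1)) : Set ℕ :=
  {i | 1 ≤ i ∧ i + 1 ≤ m + n ∧
    extendFin α (i + 1) = extendFin α i + 1 ∧ extendFin α i = extendFin α (i - 1)}

/-- `⟨β,β'⟩` is an immediate predecessor of `⟨α,α'⟩`: it is a shuffle, `β < α`,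
and no shuffle lies strictly between them. -/
def IsImmPred (m n : ℕ)
    (β : Fin (m + n + 1) → Fin (m + 1)) (β' : Fin (m + n + 1) → Fin (n + 1))
    (α : Fin (m + n + 1) → Fin (m + 1)) (α' : Fin (m + n + 1) → Fin (n + 1)) : Prop :=
  IsShuffle m n β β' ∧ ShuffleLT m n β α ∧
    ∀ (γ : Fin (m + n + 1) → Fin (m + 1)) (γ' : Fin (m + n + 1) → Fin (n + 1)),
      IsShuffle m n γ γ' → ¬ (ShuffleLT m n β γ ∧ ShuffleLT m n γ α)

/-- `⟨γ,γ'⟩` is an immediate successor of `⟨α,α'⟩`: it is a shuffle, `α < γ`,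
and no shuffle lies strictly between them. -/
def IsImmSucc (m n : ℕ)
    (γ : Fin (m + n + 1) → Fin (m + 1)) (γ' : Fin (m + n + 1) → Fin (n + 1))
    (α : Fin (m + n + 1) → Fin (m + 1)) (α' : Fin (m + n + 1) → Fin (n + 1)) : Prop :=
  IsShuffle m n γ γ' ∧ ShuffleLT m n α γ ∧
    ∀ (δ : Fin (m + n + 1) → Fin (m + 1)) (δ' : Fin (m + n + 1) → Fin (n + 1)),
      IsShuffle m n δ δ' → ¬ (ShuffleLT m n α δ ∧ ShuffleLT m n δ γ)

/-!
A shuffle is a lattice path with unit steps, and raising it at an upper-left corner changes a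
single value by one, so the result covers the original even among all functions. Conversely, if
`α < γ` are shuffles, then among the `i` with `α i < γ i` choose one maximising
`α' i - α i = i - 2 * α i`. Were the step of `α` into `i` a step up, `i - 1` would be a better
choice; were the step out of `i` flat, `i + 1` would be. Hence `i` is a corner, and raising `α`
there stays below `γ`.
-/

open Function

theorem exists_eq_of_succ_le_add_one {f : ℕ → ℕ} (hf : ∀ i, f (i + 1) ≤ f i + 1) {k N : ℕ}
    (h0 : f 0 ≤ k) (hN : k ≤ f N) : ∃ i ≤ N, f i = k := by
  induction N with
  | zero => exact ⟨0, le_rfl, le_antisymm h0 hN⟩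
  | succ N ih =>
    rcases le_or_gt k (f N) with hk | hk
    · obtain ⟨i, hi, rfl⟩ := ih hk
      exact ⟨i, hi.trans N.le_succ, rfl⟩
    · exact ⟨N + 1, le_rfl, le_antisymm ((hf N).trans hk) hN⟩

theorem monotone_update_of_le {ι β : Type*} [PartialOrder ι] [DecidableEq ι] [Preorder β]
    {f : ι → β} (hf : Monotone f) {i : ι} {b : β} (hlt : ∀ j < i, f j ≤ b)
    (hgt : ∀ j, i < j → b ≤ f j) : Monotone (update f i b) := by
  intro j k hjk
  rcases eq_or_ne j k with rfl | hne
  · rfl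
  rcases eq_or_ne j i with rfl | hj
  · rw [update_self, update_of_ne hne.symm]
    exact hgt k (hjk.lt_of_ne hne)
  rcases eq_or_ne k i with rfl | hk
  · rw [update_self, update_of_ne hne]
    exact hlt j (hjk.lt_of_ne hne)
  · rw [update_of_ne hj, update_of_ne hk]
    exact hf hjk

section ExtendFin

variable {N M : ℕ} {f g : Fin (N + 1) → Fin (M + 1)}

theorem extendFin_coe (f : Fin (N + 1) → Fin (M + 1)) (j : Fin (N + 1)) :
    extendFin f j = f j := by
  simp only [extendFin, min_eq_left (Nat.le_of_lt_succ j.isLt)]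

theorem extendFin_eq_ofNat (f : Fin (N + 1) → Fin (M + 1)) {i : ℕ} (hi : i ≤ N) :
    extendFin f i = f (Fin.ofNat (N + 1) i) := by
  rw [← extendFin_coe, Fin.val_ofNat, Nat.mod_eq_of_lt (Nat.lt_succ_of_le hi)]

theorem extendFin_le (f : Fin (N + 1) → Fin (M + 1)) (i : ℕ) : extendFin f i ≤ M :=
  Nat.le_of_lt_succ (Fin.isLt _)

theorem extendFin_le_extendFin_iff : extendFin f ≤ extendFin g ↔ f ≤ g :=
  ⟨fun h j ↦ by simpa only [extendFin_coe, Fin.val_fin_le] using h j, fun h _ ↦ h _⟩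

theorem extendFin_injective : Injective (extendFin : (Fin (N + 1) → Fin (M + 1)) → ℕ → ℕ) :=
  fun _ _ h ↦ le_antisymm (extendFin_le_extendFin_iff.1 h.le) (extendFin_le_extendFin_iff.1 h.ge)

theorem extendFin_strictMono : StrictMono (extendFin : (Fin (N + 1) → Fin (M + 1)) → ℕ → ℕ) :=
  strictMono_of_le_iff_le fun _ _ ↦ extendFin_le_extendFin_iff.symm

theorem monotone_extendFin_iff : Monotone (extendFin f) ↔ Monotone f :=
  ⟨fun h j k hjk ↦ by simpa only [extendFin_coe, Fin.val_fin_le] using h (Fin.le_def.1 hjk),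
    fun h _ _ hij ↦ h (Fin.mk_le_mk.2 (min_le_min_right N hij))⟩

theorem surjective_of_extendFin_succ_le (h0 : extendFin f 0 = 0) (hN : extendFin f N = M)
    (hf : ∀ i, extendFin f (i + 1) ≤ extendFin f i + 1) : Surjective f := by
  intro k
  obtain ⟨i, hi, hik⟩ := exists_eq_of_succ_le_add_one hf (h0.trans_le k.val.zero_le)
    ((Nat.le_of_lt_succ k.isLt).trans_eq hN.symm)
  exact ⟨Fin.ofNat (N + 1) i, Fin.ext ((extendFin_eq_ofNat f hi).symm.trans hik)⟩

-- At `i = N` this fails: clamping would propagate the new value to every `j ≥ N`.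
theorem extendFin_update (f : Fin (N + 1) → Fin (M + 1)) {i : ℕ} (hi : i < N) (a : Fin (M + 1)) :
    extendFin (update f (Fin.ofNat (N + 1) i) a) = update (extendFin f) i a := by
  funext j
  have h_iff : min j N = i ↔ j = i := by omega
  simp only [extendFin, update_apply, Fin.ext_iff, Fin.val_ofNat,
    Nat.mod_eq_of_lt (Nat.lt_succ_of_lt hi), h_iff]
  split_ifs <;> rfl

end ExtendFin

section Shuffle

variable {m n : ℕ} {α γ : Fin (m + n + 1) → Fin (m + 1)}
  {α' β' γ' : Fin (m + n + 1) → Fin (n + 1)}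

theorem isShuffle_iff_extendFin :
    IsShuffle m n α α' ↔ Monotone (extendFin α) ∧ Monotone (extendFin α') ∧
      ∀ i, extendFin α i + extendFin α' i = min i (m + n) := by
  constructor
  · rintro ⟨hmono, hmono', -, -, hadd⟩
    exact ⟨monotone_extendFin_iff.2 hmono, monotone_extendFin_iff.2 hmono', fun _ ↦ hadd _⟩
  · rintro ⟨hmono, hmono', hadd⟩
    have hstep (i : ℕ) : extendFin α (i + 1) ≤ extendFin α i + 1 ∧
        extendFin α' (i + 1) ≤ extendFin α' i + 1 := by
      have := hmono (i.le_add_right 1)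
      have := hmono' (i.le_add_right 1)
      have := hadd i
      have := hadd (i + 1)
      omega
    have hzero : extendFin α 0 = 0 ∧ extendFin α' 0 = 0 := by
      have := hadd 0
      omega
    have hlast : extendFin α (m + n) = m ∧ extendFin α' (m + n) = n := by
      have := hadd (m + n)
      have := extendFin_le α (m + n)
      have := extendFin_le α' (m + n)
      omega
    refine ⟨monotone_extendFin_iff.1 hmono, monotone_extendFin_iff.1 hmono',
      surjective_of_extendFin_succ_le hzero.1 hlast.1 fun i ↦ (hstep i).1,
      surjective_of_extendFin_succ_le hzero.2 hlast.2 fun i ↦ (hstep i).2, fun i ↦ ?_⟩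
    rw [← extendFin_coe, ← extendFin_coe, hadd, min_eq_left (Nat.le_of_lt_succ i.isLt)]

theorem shuffleLT_iff_lt : ShuffleLT m n α γ ↔ α < γ :=
  (lt_iff_le_and_ne (a := α)).symm

namespace IsShuffle

theorem monotone_extendFin (hα : IsShuffle m n α α') : Monotone (extendFin α) :=
  (isShuffle_iff_extendFin.1 hα).1

theorem monotone_extendFin_snd (hα : IsShuffle m n α α') : Monotone (extendFin α') :=
  (isShuffle_iff_extendFin.1 hα).2.1

theorem extendFin_add_extendFin (hα : IsShuffle m n α α') (i : ℕ) :
    extendFin α i + extendFin α' i = min i (m + n) :=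
  (isShuffle_iff_extendFin.1 hα).2.2 i

theorem extendFin_succ_le (hα : IsShuffle m n α α') (i : ℕ) :
    extendFin α (i + 1) ≤ extendFin α i + 1 := by
  have := hα.monotone_extendFin_snd (i.le_add_right 1)
  have := hα.extendFin_add_extendFin i
  have := hα.extendFin_add_extendFin (i + 1)
  omega

theorem extendFin_zero (hα : IsShuffle m n α α') : extendFin α 0 = 0 := by
  have := hα.extendFin_add_extendFin 0
  omega

theorem extendFin_of_ge (hα : IsShuffle m n α α') {i : ℕ} (hi : m + n ≤ i) :
    extendFin α i = m := by
  have := hα.extendFin_add_extendFin i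
  have := extendFin_le α i
  have := extendFin_le α' i
  omega

theorem snd_unique (hα : IsShuffle m n α α') (hβ : IsShuffle m n α β') : α' = β' :=
  extendFin_injective <| funext fun i ↦ Nat.add_left_cancel <|
    (hα.extendFin_add_extendFin i).trans (hβ.extendFin_add_extendFin i).symm

theorem pos_of_extendFin_lt (hγ : IsShuffle m n γ γ') {i : ℕ}
    (hlt : extendFin α i < extendFin γ i) : 0 < i := by
  by_contra! h0
  rw [Nat.le_zero.1 h0, hγ.extendFin_zero] at hlt
  exact absurd hlt (Nat.not_lt_zero _)

theorem lt_of_extendFin_lt (hα : IsShuffle m n α α') {i : ℕ}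
    (hlt : extendFin α i < extendFin γ i) : i < m + n := by
  by_contra! hge
  rw [hα.extendFin_of_ge hge] at hlt
  exact (hlt.trans_le (extendFin_le γ i)).false

theorem exists_mem_ulCorner_extendFin_lt (hα : IsShuffle m n α α') (hγ : IsShuffle m n γ γ')
    (hlt : α < γ) : ∃ i ∈ ulCorner m n α, extendFin α i < extendFin γ i := by
  let D : Set ℕ := {i | extendFin α i < extendFin γ i}
  have hD_finite : D.Finite := (Set.finite_Iio (m + n)).subset fun _ ↦ hα.lt_of_extendFin_lt
  have hD_nonempty : D.Nonempty := (Pi.lt_def.1 (extendFin_strictMono hlt)).2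
  obtain ⟨i, hi : extendFin α i < extendFin γ i, hmax⟩ :=
    D.exists_max_image (fun i ↦ (i : ℤ) - 2 * extendFin α i) hD_finite hD_nonempty
  have hpos : 0 < i := hγ.pos_of_extendFin_lt hi
  obtain ⟨k, rfl⟩ := Nat.exists_eq_add_of_le' hpos
  have hflat_in : extendFin α (k + 1) = extendFin α k := by
    by_contra hne
    have hup : extendFin α (k + 1) = extendFin α k + 1 :=
      le_antisymm (hα.extendFin_succ_le k)
        ((hα.monotone_extendFin (k.le_add_right 1)).lt_of_ne' hne)
    have hk : k ∈ D := Nat.lt_of_succ_lt_succ <|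
      calc extendFin α k + 1 = extendFin α (k + 1) := hup.symm
        _ < extendFin γ (k + 1) := hi
        _ ≤ extendFin γ k + 1 := hγ.extendFin_succ_le k
    have := hmax k hk
    push_cast at this
    omega
  have hup_out : extendFin α (k + 1 + 1) = extendFin α (k + 1) + 1 := by
    by_contra hne
    have hflat : extendFin α (k + 1 + 1) = extendFin α (k + 1) :=
      le_antisymm (Nat.le_of_lt_succ ((hα.extendFin_succ_le (k + 1)).lt_of_ne hne))
        (hα.monotone_extendFin ((k + 1).le_add_right 1))
    have hk : k + 1 + 1 ∈ D :=
      calc extendFin α (k + 1 + 1) = extendFin α (k + 1) := hflat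
        _ < extendFin γ (k + 1) := hi
        _ ≤ extendFin γ (k + 1 + 1) := hγ.monotone_extendFin ((k + 1).le_add_right 1)
    have := hmax (k + 1 + 1) hk
    push_cast at this
    omega
  exact ⟨k + 1, ⟨hpos, hα.lt_of_extendFin_lt hi, hup_out, hflat_in⟩, hi⟩

end IsShuffle

/-- The pair obtained from `⟨α, α'⟩` by raising `α` and lowering `α'` by one at the single index
`i`: on lattice paths, flipping the upper-left corner at `i`. The arithmetic is modular, in
`Fin (m + 1)` and `Fin (n + 1)`, and `i` is reduced modulo `m + n + 1`; nothing wraps around when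
`i` is an upper-left corner of a shuffle. -/
def cornerFlip (α : Fin (m + n + 1) → Fin (m + 1)) (α' : Fin (m + n + 1) → Fin (n + 1)) (i : ℕ) :
    (Fin (m + n + 1) → Fin (m + 1)) × (Fin (m + n + 1) → Fin (n + 1)) :=
  let j := Fin.ofNat (m + n + 1) i
  (update α j (α j + 1), update α' j (α' j - 1))

variable {i : ℕ}

theorem val_apply_add_one_of_mem_ulCorner (hi : i ∈ ulCorner m n α) :
    (α (Fin.ofNat (m + n + 1) i) + 1 : Fin (m + 1)).val = α (Fin.ofNat (m + n + 1) i) + 1 := by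
  refine Fin.val_add_one_of_lt (Fin.lt_def.2 ?_)
  calc (α (Fin.ofNat (m + n + 1) i) : ℕ)
      = extendFin α i := (extendFin_eq_ofNat α (Nat.le_of_lt hi.2.1)).symm
    _ < extendFin α (i + 1) := Nat.lt_of_succ_le hi.2.2.1.ge
    _ ≤ m := extendFin_le α (i + 1)

theorem cornerFlip_fst_of_ne (hi : i ≤ m + n) {j : Fin (m + n + 1)} (hj : (j : ℕ) ≠ i) :
    (cornerFlip α α' i).1 j = α j := by
  refine update_of_ne (fun h ↦ hj ?_) _ _
  rw [h, Fin.val_ofNat, Nat.mod_eq_of_lt (Nat.lt_succ_of_le hi)]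

theorem extendFin_cornerFlip_fst (hi : i ∈ ulCorner m n α) :
    extendFin (cornerFlip α α' i).1 = update (extendFin α) i (extendFin α i + 1) := by
  rw [cornerFlip, extendFin_update α hi.2.1, val_apply_add_one_of_mem_ulCorner hi,
    extendFin_eq_ofNat α (Nat.le_of_lt hi.2.1)]

theorem extendFin_cornerFlip_fst_self (hi : i ∈ ulCorner m n α) :
    extendFin (cornerFlip α α' i).1 i = extendFin α i + 1 := by
  rw [extendFin_cornerFlip_fst hi, update_self]

theorem covBy_cornerFlip_fst (hi : i ∈ ulCorner m n α) : α ⋖ (cornerFlip α α' i).1 :=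
  Pi.covBy_iff_exists_right_eq.2 ⟨_, _, Fin.covBy_iff.2 <|
    Nat.covBy_iff_add_one_eq.2 (val_apply_add_one_of_mem_ulCorner hi).symm, rfl⟩

theorem cornerFlip_fst_le (hi : i ∈ ulCorner m n α) (hle : α ≤ γ)
    (hlt : extendFin α i < extendFin γ i) : (cornerFlip α α' i).1 ≤ γ := by
  rw [← extendFin_le_extendFin_iff, extendFin_cornerFlip_fst hi, update_le_iff]
  exact ⟨hlt, fun j _ ↦ extendFin_le_extendFin_iff.2 hle j⟩

theorem injOn_cornerFlip : Set.InjOn (cornerFlip α α') (ulCorner m n α) := by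
  intro i hi k hk heq
  by_contra hne
  have hraise := extendFin_cornerFlip_fst_self (α' := α') hi
  rw [heq, extendFin_cornerFlip_fst hk, update_of_ne hne] at hraise
  exact Nat.succ_ne_self _ hraise.symm

namespace IsShuffle

theorem extendFin_snd_of_mem_ulCorner (hα : IsShuffle m n α α') (hi : i ∈ ulCorner m n α) :
    extendFin α' i = extendFin α' (i - 1) + 1 := by
  obtain ⟨hpos, hlt, -, hflat⟩ := hi
  have := hα.extendFin_add_extendFin i
  have := hα.extendFin_add_extendFin (i - 1)
  omega

theorem extendFin_cornerFlip_snd (hα : IsShuffle m n α α') (hi : i ∈ ulCorner m n α) :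
    extendFin (cornerFlip α α' i).2 = update (extendFin α') i (extendFin α' i - 1) := by
  have hpos : 0 < extendFin α' i :=
    (Nat.succ_pos _).trans_eq (hα.extendFin_snd_of_mem_ulCorner hi).symm
  rw [extendFin_eq_ofNat α' (Nat.le_of_lt hi.2.1)] at hpos ⊢
  rw [cornerFlip, extendFin_update α' hi.2.1, Fin.val_sub_one_of_ne_zero]
  exact Fin.pos_iff_ne_zero.1 hpos

theorem isShuffle_cornerFlip (hα : IsShuffle m n α α') (hi : i ∈ ulCorner m n α) :
    IsShuffle m n (cornerFlip α α' i).1 (cornerFlip α α' i).2 := by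
  have hdrop := hα.extendFin_snd_of_mem_ulCorner hi
  rw [isShuffle_iff_extendFin, extendFin_cornerFlip_fst hi, hα.extendFin_cornerFlip_snd hi]
  refine ⟨monotone_update_of_le hα.monotone_extendFin (fun j hj ↦ ?_) (fun j hj ↦ ?_),
    monotone_update_of_le hα.monotone_extendFin_snd (fun j hj ↦ ?_) (fun j hj ↦ ?_), fun j ↦ ?_⟩
  · exact (hα.monotone_extendFin hj.le).trans (Nat.le_add_right _ 1)
  · exact hi.2.2.1 ▸ hα.monotone_extendFin hj
  · rw [hdrop, Nat.add_sub_cancel]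
    exact hα.monotone_extendFin_snd (Nat.le_sub_one_of_lt hj)
  · exact (Nat.sub_le _ 1).trans (hα.monotone_extendFin_snd hj.le)
  · have hadd := hα.extendFin_add_extendFin j
    rcases eq_or_ne j i with rfl | hj
    · rw [update_self, update_self]
      omega
    · rwa [update_of_ne hj, update_of_ne hj]

theorem isImmSucc_cornerFlip (hα : IsShuffle m n α α') (hi : i ∈ ulCorner m n α) :
    IsImmSucc m n (cornerFlip α α' i).1 (cornerFlip α α' i).2 α α' := by
  have hcov : α ⋖ (cornerFlip α α' i).1 := covBy_cornerFlip_fst hi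
  exact ⟨hα.isShuffle_cornerFlip hi, shuffleLT_iff_lt.2 hcov.lt, fun δ _ _ ⟨hαδ, hδ⟩ ↦
    hcov.2 (shuffleLT_iff_lt.1 hαδ) (shuffleLT_iff_lt.1 hδ)⟩

theorem exists_cornerFlip_eq_of_isImmSucc (hα : IsShuffle m n α α')
    (hγ : IsImmSucc m n γ γ' α α') : ∃ i ∈ ulCorner m n α, cornerFlip α α' i = (γ, γ') := by
  obtain ⟨hγ_shuffle, hlt, hbetween⟩ := hγ
  obtain ⟨i, hi, hi_lt⟩ :=
    hα.exists_mem_ulCorner_extendFin_lt hγ_shuffle (shuffleLT_iff_lt.1 hlt)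
  have hflip := hα.isShuffle_cornerFlip hi
  have hfst : (cornerFlip α α' i).1 = γ := by
    by_contra hne
    exact hbetween _ _ hflip ⟨shuffleLT_iff_lt.2 (covBy_cornerFlip_fst hi).lt,
      cornerFlip_fst_le hi hlt.1 hi_lt, hne⟩
  exact ⟨i, hi, Prod.ext hfst ((hfst ▸ hflip).snd_unique hγ_shuffle)⟩

end IsShuffle

end Shuffle

/-- The assignment sending each `i` in the upper-left corner set of a shuffle
`⟨α,α'⟩` to the unique shuffle agreeing with `α` away from `i` and taking the
value `α i + 1` at `i` is a bijection onto the set of immediate successors of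
`⟨α,α'⟩`. -/
theorem ulCorner_bijOn_immSucc (m n : ℕ)
    (α : Fin (m + n + 1) → Fin (m + 1)) (α' : Fin (m + n + 1) → Fin (n + 1))
    (hα : IsShuffle m n α α') :
    ∃ Φ : ℕ → (Fin (m + n + 1) → Fin (m + 1)) × (Fin (m + n + 1) → Fin (n + 1)),
      (∀ i ∈ ulCorner m n α,
        (∀ j : Fin (m + n + 1), (j : ℕ) ≠ i → (Φ i).1 j = α j) ∧
          extendFin (Φ i).1 i = extendFin α i + 1) ∧
      Set.BijOn Φ (ulCorner m n α)
        {p : (Fin (m + n + 1) → Fin (m + 1)) × (Fin (m + n + 1) → Fin (n + 1)) |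
          IsImmSucc m n p.1 p.2 α α'} := by
  refine ⟨cornerFlip α α', fun i hi ↦ ⟨fun j ↦ ?_, ?_⟩, ?_, ?_, ?_⟩
  · exact cornerFlip_fst_of_ne (Nat.le_of_lt hi.2.1)
  · exact extendFin_cornerFlip_fst_self hi
  · exact fun i hi ↦ hα.isImmSucc_cornerFlip hi
  · exact injOn_cornerFlip
  · exact fun _ hγ ↦ hα.exists_cornerFlip_eq_of_isImmSucc hγ
end

section
/- Let ⟨α,α'⟩ be an (m,n)-shuffle. Then for any i with 1 ≤ i ≤ m+n−1, precisely one of the following four conditions holds: (a) i ∈ ⌞⟨α,α'⟩; (b) i ∈ ⌜⟨α,α'⟩; (c) the fibre α⁻¹(α(i)) equals the singleton {i}; (d) the fibre (α')⁻¹(α'(i)) equals the singleton {i}. -/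
/-!
Each unit step of a shuffle raises exactly one of the two components, and it raises it by `1`.
The point `i` is entered by one step and left by another, and which component each of these two
steps raises gives four mutually exclusive patterns: `α` then `α'` is a lower-right corner, `α'`
then `α` an upper-left corner, while `α` twice or `α'` twice isolates `i` in its fibre under that
component, because a fibre of a monotone map is order-convex.
-/

theorem preimage_singleton_eq_singleton_iff_of_covBy {ι β : Type*} [LinearOrder ι]
    [PartialOrder β] {f : ι → β} (hf : Monotone f) {p i s : ι} (hpi : p ⋖ i) (his : i ⋖ s) :
    f ⁻¹' {f i} = {i} ↔ f p < f i ∧ f i < f s := by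
  constructor
  · intro hfibre
    have eq_of_map_eq : ∀ x, f x = f i → x = i := fun x hx => hfibre.subset hx
    exact ⟨(hf hpi.le).lt_of_ne fun h => hpi.ne (eq_of_map_eq p h),
      (hf his.le).lt_of_ne fun h => his.ne' (eq_of_map_eq s h.symm)⟩
  · rintro ⟨hfp, hfs⟩
    refine Set.eq_singleton_iff_unique_mem.2 ⟨rfl, fun x (hx : f x = f i) => ?_⟩
    rcases lt_trichotomy x i with hxi | hxi | hix
    · exact absurd hx ((hf (hpi.le_of_lt hxi)).trans_lt hfp).ne
    · exact hxi
    · exact absurd hx (hfs.trans_le (hf (his.ge_of_gt hix))).ne'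

theorem extendFin_val {N M : ℕ} (f : Fin (N + 1) → Fin (M + 1)) (i : Fin (N + 1)) :
    extendFin f i = f i := by
  simp only [extendFin, min_eq_left i.is_le]

theorem extendFin_add_one_of_covBy {N M : ℕ} (f : Fin (N + 1) → Fin (M + 1))
    {j k : Fin (N + 1)} (hjk : j ⋖ k) : extendFin f (j + 1) = f k := by
  rw [Nat.covBy_iff_add_one_eq.1 hjk.coe_fin, extendFin_val]

theorem extendFin_sub_one_of_covBy {N M : ℕ} (f : Fin (N + 1) → Fin (M + 1))
    {j k : Fin (N + 1)} (hjk : j ⋖ k) : extendFin f (k - 1) = f j := by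
  rw [← Nat.covBy_iff_add_one_eq.1 hjk.coe_fin, Nat.add_sub_cancel, extendFin_val]

namespace IsShuffle

variable {m n : ℕ} {α : Fin (m + n + 1) → Fin (m + 1)} {α' : Fin (m + n + 1) → Fin (n + 1)}
  {j k p i s : Fin (m + n + 1)}

theorem covBy_step_cases (hα : IsShuffle m n α α') (hjk : j ⋖ k) :
    ((α k : ℕ) = α j + 1 ∧ α' k = α' j) ∨ (α k = α j ∧ (α' k : ℕ) = α' j + 1) := by
  obtain ⟨hmono, hmono', -, -, hsum⟩ := hα
  have hle : (α j : ℕ) ≤ α k := hmono hjk.le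
  have hle' : (α' j : ℕ) ≤ α' k := hmono' hjk.le
  have hval : (j : ℕ) + 1 = k := Nat.covBy_iff_add_one_eq.1 hjk.coe_fin
  have hsumj := hsum j
  have hsumk := hsum k
  omega

theorem fst_lt_iff_val_eq_add_one (hα : IsShuffle m n α α') (hjk : j ⋖ k) :
    α j < α k ↔ (α k : ℕ) = α j + 1 := by
  have := hα.covBy_step_cases hjk
  omega

theorem not_fst_lt_iff_val_eq (hα : IsShuffle m n α α') (hjk : j ⋖ k) :
    ¬α j < α k ↔ (α k : ℕ) = α j := by
  have := hα.covBy_step_cases hjk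
  omega

theorem snd_lt_iff_not_fst_lt (hα : IsShuffle m n α α') (hjk : j ⋖ k) :
    α' j < α' k ↔ ¬α j < α k := by
  have := hα.covBy_step_cases hjk
  omega

theorem mem_lrCorner_iff (hα : IsShuffle m n α α') (hpi : p ⋖ i) (his : i ⋖ s) :
    (i : ℕ) ∈ lrCorner m n α ↔ α p < α i ∧ ¬α i < α s := by
  have hlower : 1 ≤ (i : ℕ) := Nat.one_le_of_lt hpi.lt
  have hupper : (i : ℕ) + 1 ≤ m + n := (Nat.succ_le_of_lt his.lt).trans s.is_le
  rw [hα.fst_lt_iff_val_eq_add_one hpi, hα.not_fst_lt_iff_val_eq his]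
  simp only [lrCorner, Set.mem_ofPred_eq, hlower, hupper, extendFin_val,
    extendFin_add_one_of_covBy α his, extendFin_sub_one_of_covBy α hpi, true_and]
  exact and_comm

theorem mem_ulCorner_iff (hα : IsShuffle m n α α') (hpi : p ⋖ i) (his : i ⋖ s) :
    (i : ℕ) ∈ ulCorner m n α ↔ ¬α p < α i ∧ α i < α s := by
  have hlower : 1 ≤ (i : ℕ) := Nat.one_le_of_lt hpi.lt
  have hupper : (i : ℕ) + 1 ≤ m + n := (Nat.succ_le_of_lt his.lt).trans s.is_le
  rw [hα.not_fst_lt_iff_val_eq hpi, hα.fst_lt_iff_val_eq_add_one his]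
  simp only [ulCorner, Set.mem_ofPred_eq, hlower, hupper, extendFin_val,
    extendFin_add_one_of_covBy α his, extendFin_sub_one_of_covBy α hpi, true_and]
  exact and_comm

theorem snd_fibre_eq_singleton_iff (hα : IsShuffle m n α α') (hpi : p ⋖ i) (his : i ⋖ s) :
    α' ⁻¹' {α' i} = {i} ↔ ¬α p < α i ∧ ¬α i < α s := by
  rw [preimage_singleton_eq_singleton_iff_of_covBy hα.2.1 hpi his,
    hα.snd_lt_iff_not_fst_lt hpi, hα.snd_lt_iff_not_fst_lt his]

end IsShuffle

/-- For an `(m,n)`-shuffle `⟨α,α'⟩` and any `1 ≤ i ≤ m+n-1`, exactly one of the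
following holds: `i` is a lower-right corner, `i` is an upper-left corner, the
fibre of `α` over `α i` is `{i}`, or the fibre of `α'` over `α' i` is `{i}`. -/
theorem corner_or_singleton_fibre (m n : ℕ)
    (α : Fin (m + n + 1) → Fin (m + 1)) (α' : Fin (m + n + 1) → Fin (n + 1))
    (hα : IsShuffle m n α α')
    (i : Fin (m + n + 1)) (h1 : 1 ≤ (i : ℕ)) (h2 : (i : ℕ) + 1 ≤ m + n) :
    ((i : ℕ) ∈ lrCorner m n α ∨ (i : ℕ) ∈ ulCorner m n α ∨
        α ⁻¹' {α i} = {i} ∨ α' ⁻¹' {α' i} = {i}) ∧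
    ¬((i : ℕ) ∈ lrCorner m n α ∧ (i : ℕ) ∈ ulCorner m n α) ∧
    ¬((i : ℕ) ∈ lrCorner m n α ∧ α ⁻¹' {α i} = {i}) ∧
    ¬((i : ℕ) ∈ lrCorner m n α ∧ α' ⁻¹' {α' i} = {i}) ∧
    ¬((i : ℕ) ∈ ulCorner m n α ∧ α ⁻¹' {α i} = {i}) ∧
    ¬((i : ℕ) ∈ ulCorner m n α ∧ α' ⁻¹' {α' i} = {i}) ∧
    ¬(α ⁻¹' {α i} = {i} ∧ α' ⁻¹' {α' i} = {i}) := by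
  obtain ⟨p, hpi⟩ : ∃ p, p ⋖ i :=
    ⟨⟨i - 1, by omega⟩, Fin.covBy_iff.2 (Nat.covBy_iff_add_one_eq.2 (Nat.sub_add_cancel h1))⟩
  obtain ⟨s, his⟩ : ∃ s, i ⋖ s :=
    ⟨⟨i + 1, by omega⟩, Fin.covBy_iff.2 (Nat.covBy_iff_add_one_eq.2 rfl)⟩
  rw [hα.mem_lrCorner_iff hpi his, hα.mem_ulCorner_iff hpi his,
    preimage_singleton_eq_singleton_iff_of_covBy hα.1 hpi his,
    hα.snd_fibre_eq_singleton_iff hpi his]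
  tauto
end
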